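/- For n = 5 prisoners, every number of states q ≥ 3, and every number of rooms r ≥ 1 with r ≠ 3, the prisoners have a winning strategy for r rooms with q states. -/

import Mathlib

namespace PrisonersGame

/-- A deterministic strategy for a prisoner: given the list of states observed
on previous visits and the state observed on the current visit, return the
state to leave the room in and whether to declare. -/
def Strategy : Type := List ℕ → ℕ → ℕ × Bool

/-- A strategy is valid for `q` states if, whenever all states observed so far
are among `0, …, q-1`, the state it leaves the room in is among `0, …, q-1`. -/
def Strategy.ValidFor (q : ℕ) (σ : Strategy) : Prop :=
  ∀ (h : List ℕ) (s : ℕ), (∀ x ∈ h, x < q) → s < q → (σ h s).1 < q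

/-- A schedule: at each time step, one prisoner is led into one room. -/
def Schedule (n r : ℕ) : Type := ℕ → Fin n × Fin r

/-- A schedule is fair if every prisoner is led into every room infinitely often. -/
def Schedule.Fair {n r : ℕ} (sched : Schedule n r) : Prop :=
  ∀ (p : Fin n) (room : Fin r), {t : ℕ | sched t = (p, room)}.Infinite

/-- The state of play just before step `t`: the current states of the rooms, and
the list of states observed so far by each prisoner. All rooms start in state `0`. -/
def run {n r : ℕ} (strat : Fin n → Strategy) (sched : Schedule n r) :
    ℕ → (Fin r → ℕ) × (Fin n → List ℕ)
  | 0 => (fun _ => 0, fun _ => [])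
  | t + 1 =>
      let prev := run strat sched t
      let p := (sched t).1
      let room := (sched t).2
      let obs := prev.1 room
      (Function.update prev.1 room (strat p (prev.2 p) obs).1,
        Function.update prev.2 p (prev.2 p ++ [obs]))

/-- The prisoner visiting at step `t` declares during that visit. -/
def declaresAt {n r : ℕ} (strat : Fin n → Strategy) (sched : Schedule n r)
    (t : ℕ) : Prop :=
  (strat (sched t).1 ((run strat sched t).2 (sched t).1)
      ((run strat sched t).1 (sched t).2)).2 = true

/-- Every prisoner has visited every room by step `t` (inclusive). -/
def allVisitedBy {n r : ℕ} (sched : Schedule n r) (t : ℕ) : Prop :=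
  ∀ (p : Fin n) (room : Fin r), ∃ s ≤ t, sched s = (p, room)

/-- A strategy profile is winning if, for every fair schedule, some prisoner
eventually declares, and no prisoner ever declares at a time before every
prisoner has visited every room. -/
def Winning {n r : ℕ} (strat : Fin n → Strategy) : Prop :=
  ∀ sched : Schedule n r, sched.Fair →
    (∃ t, declaresAt strat sched t) ∧
    ∀ t, declaresAt strat sched t → allVisitedBy sched t

/-- `n` prisoners have a winning strategy for `r` rooms with `q` states. -/
def HasWinningStrategy (n r q : ℕ) : Prop :=
  ∃ strat : Fin n → Strategy, (∀ p, (strat p).ValidFor q) ∧ Winning (n := n) (r := r) strat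

/-- `n` prisoners have a symmetric winning strategy (all prisoners use the
same strategy) for `r` rooms with `q` states. -/
def HasSymmetricWinningStrategy (n r q : ℕ) : Prop :=
  ∃ σ : Strategy, σ.ValidFor q ∧ Winning (n := n) (r := r) (fun _ => σ)

end PrisonersGame

namespace PrisonersGame

/-- An automaton profile: prisoner, stage, observation to new stage, written state, declaration. -/
abbrev Act (n : ℕ) := Fin n → ℕ → ℕ → ℕ × ℕ × Bool

/-- The stage reached by prisoner `p` after observing the history `h`. -/
def stg {n : ℕ} (act : Act n) (p : Fin n) (h : List ℕ) : ℕ :=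
  h.foldl (fun k s => (act p k s).1) 0

/-- The strategy profile given by an automaton profile. -/
def mkStrat {n : ℕ} (act : Act n) (p : Fin n) : Strategy :=
  fun h s => (act p (stg act p h) s).2

/-- Visited relation after `p` visits `ρ`. -/
def vis {n r : ℕ} (V : Fin n → Fin r → Prop) (p : Fin n) (ρ : Fin r) : Fin n → Fin r → Prop :=
  fun p' ρ' => V p' ρ' ∨ (p' = p ∧ ρ' = ρ)

theorem winning_of_inv {n r : ℕ} (act : Act n)
    (Inv : (Fin r → ℕ) → (Fin n → ℕ) → (Fin n → Fin r → Prop) → Prop) (N : ℕ)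
    (h0 : Inv (fun _ => 0) (fun _ => 0) (fun _ _ => False))
    (hmono : ∀ R S V V', (∀ p ρ, V p ρ → V' p ρ) → Inv R S V → Inv R S V')
    (hstep : ∀ R S V p ρ, Inv R S V →
      act p (S p) (R ρ) = (S p, R ρ, false) ∨
      (S p < (act p (S p) (R ρ)).1 ∧ (act p (S p) (R ρ)).1 ≤ N ∧
        ((act p (S p) (R ρ)).2.2 = true → ∀ p' ρ', vis V p ρ p' ρ') ∧
        ((act p (S p) (R ρ)).2.2 = false →
          Inv (Function.update R ρ (act p (S p) (R ρ)).2.1)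
            (Function.update S p (act p (S p) (R ρ)).1) (vis V p ρ))))
    (hprog : ∀ R S V, Inv R S V → ∃ p ρ, act p (S p) (R ρ) ≠ (S p, R ρ, false)) :
    Winning (n := n) (r := r) (mkStrat act) := by
  intro sched hfair
  set R : ℕ → Fin r → ℕ := fun t => (run (mkStrat act) sched t).1 with hR
  set S : ℕ → Fin n → ℕ := fun t p => stg act p ((run (mkStrat act) sched t).2 p) with hS
  set V : ℕ → Fin n → Fin r → Prop := fun t p ρ => ∃ s < t, sched s = (p, ρ) with hV
  have hdecl : ∀ t, declaresAt (mkStrat act) sched t ↔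
      (act (sched t).1 (S t (sched t).1) (R t (sched t).2)).2.2 = true := fun t => Iff.rfl
  have hRs : ∀ t, R (t + 1) = Function.update (R t) (sched t).2
      (act (sched t).1 (S t (sched t).1) (R t (sched t).2)).2.1 := fun t => rfl
  have hSs : ∀ t, S (t + 1) = Function.update (S t) (sched t).1
      (act (sched t).1 (S t (sched t).1) (R t (sched t).2)).1 := by
    intro t
    funext p
    by_cases hp : p = (sched t).1
    · subst hp
      simp [hS, hR, run, stg, List.foldl_append]
    · simp [hS, run, Function.update_of_ne hp]
  have hVs : ∀ t, V (t + 1) = vis (V t) (sched t).1 (sched t).2 := by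
    intro t
    funext p ρ
    apply propext
    constructor
    · rintro ⟨s, hs, h⟩
      rcases Nat.lt_succ_iff_lt_or_eq.mp hs with h' | h'
      · exact Or.inl ⟨s, h', h⟩
      · subst h'
        right
        rw [h]
        exact ⟨rfl, rfl⟩
    · rintro (⟨s, hs, h⟩ | ⟨h1, h2⟩)
      · exact ⟨s, by omega, h⟩
      · exact ⟨t, by omega, by rw [h1, h2]⟩
  have hidle : ∀ t, act (sched t).1 (S t (sched t).1) (R t (sched t).2) =
      (S t (sched t).1, R t (sched t).2, false) → R (t + 1) = R t ∧ S (t + 1) = S t := by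
    intro t h
    rw [hRs, hSs, h]
    simp
  have hinv : ∀ t, (∀ s < t, ¬ declaresAt (mkStrat act) sched s) →
      Inv (R t) (S t) (V t) ∧ ∀ p, S t p ≤ N := by
    intro t
    induction t with
    | zero =>
      intro _
      refine ⟨?_, ?_⟩
      · have hV0 : V 0 = fun _ _ => False := by
          funext p ρ
          simp [hV]
        rw [hV0]
        exact h0
      · intro p
        simp [hS, run, stg]
    | succ t ih =>
      intro hnd
      obtain ⟨hI, hb⟩ := ih (fun s hs => hnd s (by omega))
      have hd := hnd t (by omega)
      rw [hdecl] at hd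
      rcases hstep _ _ _ (sched t).1 (sched t).2 hI with h | ⟨_, h2, _, h4⟩
      · obtain ⟨e1, e2⟩ := hidle t h
        rw [e1, e2]
        refine ⟨hmono _ _ _ _ ?_ hI, hb⟩
        rintro p ρ ⟨s, hs, h⟩
        exact ⟨s, by omega, h⟩
      · refine ⟨?_, ?_⟩
        · rw [hRs, hSs, hVs]
          exact h4 (by simpa using hd)
        · intro p
          rw [hSs]
          by_cases hp : p = (sched t).1
          · subst hp
            simpa using h2
          · simpa [Function.update_of_ne hp] using hb p
  constructor
  · by_contra hno
    push Not at hno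
    have hI : ∀ t, Inv (R t) (S t) (V t) ∧ ∀ p, S t p ≤ N := fun t => hinv t (fun s _ => hno s)
    let f : ℕ → ℕ := fun t => ∑ p, S t p
    have hmon1 : ∀ t, (R (t + 1) = R t ∧ S (t + 1) = S t ∧
        act (sched t).1 (S t (sched t).1) (R t (sched t).2) =
          (S t (sched t).1, R t (sched t).2, false)) ∨ f t < f (t + 1) := by
      intro t
      rcases hstep _ _ _ (sched t).1 (sched t).2 (hI t).1 with h | ⟨h1, _⟩
      · left
        exact ⟨(hidle t h).1, (hidle t h).2, h⟩
      · right
        apply Finset.sum_lt_sum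
        · intro p _
          rw [hSs]
          by_cases hp : p = (sched t).1
          · subst hp
            simpa using h1.le
          · simp [Function.update_of_ne hp]
        · exact ⟨(sched t).1, Finset.mem_univ _, by rw [hSs]; simpa using h1⟩
    have hfb : ∀ t, f t ≤ n * N := by
      intro t
      calc f t ≤ ∑ _p : Fin n, N := Finset.sum_le_sum (fun p _ => (hI t).2 p)
        _ = n * N := by simp
    have hfm : Monotone f := by
      apply monotone_nat_of_le_succ
      intro t
      rcases hmon1 t with h | h
      · simp [f, h.2.1]
      · exact h.le
    obtain ⟨T, hT⟩ : ∃ T, ∀ t, f t ≤ f T := by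
      have hbdd : (Set.range f).Finite :=
        (Set.finite_Iic (n * N)).subset (by rintro _ ⟨t, rfl⟩; exact hfb t)
      obtain ⟨_, ⟨T, rfl⟩, hm⟩ := Set.exists_max_image (Set.range f) id hbdd ⟨_, 0, rfl⟩
      exact ⟨T, fun t => hm _ ⟨t, rfl⟩⟩
    have hconst : ∀ k, R (T + k) = R T ∧ S (T + k) = S T := by
      intro k
      induction k with
      | zero => simp
      | succ k ih =>
        rcases hmon1 (T + k) with h | h
        · rw [← add_assoc, h.1, h.2.1]
          exact ih
        · have := hT (T + k + 1)
          have := hfm (show T ≤ T + k by omega)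
          omega
    obtain ⟨p, ρ, hpr⟩ := hprog _ _ _ (hI T).1
    obtain ⟨t, ht, hlt⟩ := (hfair p ρ).exists_gt T
    obtain ⟨k, rfl⟩ := Nat.exists_eq_add_of_lt hlt
    rcases hmon1 (T + k + 1) with h | h
    · have h3 := h.2.2
      have hc := hconst (k + 1)
      rw [← add_assoc] at hc
      rw [hc.1, hc.2] at h3
      have ht' : sched (T + k + 1) = (p, ρ) := ht
      rw [ht'] at h3
      exact hpr h3
    · have := hT (T + k + 1 + 1)
      have := hfm (show T ≤ T + k + 1 by omega)
      omega
  · intro t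
    induction t using Nat.strong_induction_on with
    | _ t ih =>
      intro hd
      by_cases hprev : ∃ s < t, declaresAt (mkStrat act) sched s
      · obtain ⟨s, hs, hds⟩ := hprev
        intro p ρ
        obtain ⟨u, hu, h⟩ := ih s hs hds p ρ
        exact ⟨u, by omega, h⟩
      · push Not at hprev
        obtain ⟨hI, _⟩ := hinv t hprev
        rw [hdecl] at hd
        intro p ρ
        rcases hstep _ _ _ (sched t).1 (sched t).2 hI with h | ⟨_, _, h3, _⟩
        · rw [h] at hd
          simp at hd
        · have h5 := h3 hd p ρ
          rw [← hVs] at h5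
          obtain ⟨s, hs, h⟩ := h5
          exact ⟨s, by omega, h⟩

theorem valid_of_act {n : ℕ} (act : Act n) (q : ℕ) (hq : 3 ≤ q)
    (h : ∀ p k s, (act p k s).2.1 ≤ 2 ∨ (act p k s).2.1 = s) (p : Fin n) :
    (mkStrat act p).ValidFor q := by
  intro hist s _ hs
  rcases h p (stg act p hist) s with h | h
  · exact lt_of_le_of_lt h (by omega)
  · exact lt_of_eq_of_lt h hs

end PrisonersGame

namespace PrisonersGame

/-! ### One room -/

/-- The protocol for one room. -/
def actOne : Act 5 := fun p k s =>
  if p = 0 then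
    if k ≤ 3 ∧ s = 1 then (k + 1, 0, decide (k = 3)) else (k, s, false)
  else
    if k = 0 ∧ s = 0 then (1, 1, false) else (k, s, false)

/-- The invariant for one room. -/
def InvOne (R : Fin 1 → ℕ) (S : Fin 5 → ℕ) (V : Fin 5 → Fin 1 → Prop) : Prop :=
  S 0 ≤ 3 ∧ (∀ X, X ≠ 0 → S X ≤ 1) ∧ R 0 ≤ 1 ∧ S 1 + S 2 + S 3 + S 4 = S 0 + R 0 ∧
    ∀ X, X ≠ 0 → S X = 1 → V X 0

theorem winning_one : Winning (n := 5) (r := 1) (mkStrat actOne) := by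
  apply winning_of_inv actOne InvOne 4
  · simp [InvOne]
  · rintro R S V V' h ⟨h1, h2, h3, h4, h5⟩
    exact ⟨h1, h2, h3, h4, fun X hX h' => h _ _ (h5 X hX h')⟩
  · rintro R S V p ρ ⟨h1, h2, h3, h4, h5⟩
    obtain rfl : ρ = 0 := Subsingleton.elim _ _
    have e1 := h2 1 (by decide)
    have e2 := h2 2 (by decide)
    have e3 := h2 3 (by decide)
    have e4 := h2 4 (by decide)
    have v1 := h5 1 (by decide)
    have v2 := h5 2 (by decide)
    have v3 := h5 3 (by decide)
    have v4 := h5 4 (by decide)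
    by_cases hp : p = 0
    · subst hp
      by_cases hc : S 0 ≤ 3 ∧ R 0 = 1
      · right
        have ha : actOne 0 (S 0) (R 0) = (S 0 + 1, 0, decide (S 0 = 3)) := by
          simp [actOne, hc]
        rw [ha]
        refine ⟨by simp, by simp; omega, ?_, ?_⟩
        · intro hd
          have hd' : S 0 = 3 := by simpa using hd
          intro p' ρ'
          obtain rfl : ρ' = 0 := Subsingleton.elim _ _
          fin_cases p'
          · exact Or.inr ⟨rfl, rfl⟩
          · exact Or.inl (v1 (by omega))
          · exact Or.inl (v2 (by omega))
          · exact Or.inl (v3 (by omega))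
          · exact Or.inl (v4 (by omega))
        · intro hd
          have hd' : S 0 ≠ 3 := by simpa using hd
          refine ⟨?_, ?_, ?_, ?_, ?_⟩
          · simp; omega
          · intro X hX
            simpa [hX] using h2 X hX
          · simp
          · simp; omega
          · intro X hX h'
            left
            exact h5 X hX (by simpa [hX] using h')
      · left
        simp [actOne, hc]
    · by_cases hc : S p = 0 ∧ R 0 = 0
      · right
        have ha : actOne p (S p) (R 0) = (1, 1, false) := by
          simp [actOne, hc, hp]
        rw [ha]
        refine ⟨by simp [hc], by simp, by simp, fun _ => ⟨?_, ?_, ?_, ?_, ?_⟩⟩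
        · simpa [Function.update_of_ne (Ne.symm hp)] using h1
        · intro X hX
          by_cases hXp : X = p
          · subst hXp; simp
          · simpa [hXp] using h2 X hX
        · simp
        · obtain ⟨hc1, hc2⟩ := hc
          fin_cases p <;> simp [Function.update_apply] at * <;> omega
        · intro X hX h'
          by_cases hXp : X = p
          · exact Or.inr ⟨hXp, rfl⟩
          · exact Or.inl (h5 X hX (by simpa [hXp] using h'))
      · left
        simp [actOne, hc, hp]
  · rintro R S V ⟨h1, h2, h3, h4, h5⟩
    by_cases hR : R 0 = 1
    · refine ⟨0, 0, ?_⟩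
      simp [actOne, hR, h1]
    · have hR0 : R 0 = 0 := by omega
      have : ∃ X : Fin 5, X ≠ 0 ∧ S X = 0 := by
        by_contra hno
        push Not at hno
        have f1 := hno 1 (by decide)
        have f2 := hno 2 (by decide)
        have f3 := hno 3 (by decide)
        have f4 := hno 4 (by decide)
        omega
      obtain ⟨X, hX, hS⟩ := this
      refine ⟨X, 0, ?_⟩
      simp [actOne, hR0, hX, hS]

end PrisonersGame

namespace PrisonersGame

/-! ### Two rooms -/

/-- The protocol for two rooms. -/
def actTwo : Act 5 := fun p k s =>
  if p = 0 then
    if k < 2 ∧ s = 0 then (k + 1, 1, false)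
    else if k = 2 ∧ s = 1 then (3, 2, false)
    else if 3 ≤ k ∧ k ≤ 6 ∧ s = 0 then (k + 1, 2, decide (k = 6))
    else (k, s, false)
  else
    if k = 0 ∧ s = 2 then (1, 2, false)
    else if k = 1 ∧ s = 1 then (2, 1, false)
    else if k = 2 ∧ s = 2 then (3, 0, false)
    else (k, s, false)

/-- The number of done followers. -/
def doneTwo (S : Fin 5 → ℕ) : ℕ :=
  (if S 1 = 3 then 1 else 0) + (if S 2 = 3 then 1 else 0) +
    (if S 3 = 3 then 1 else 0) + (if S 4 = 3 then 1 else 0)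

/-- First phase of the invariant for two rooms. -/
def InvTwoA (R : Fin 2 → ℕ) (S : Fin 5 → ℕ) (V : Fin 5 → Fin 2 → Prop) : Prop :=
  (∀ X, X ≠ 0 → S X = 0) ∧ (∀ ρ, R ρ ≤ 1) ∧ S 0 = R 0 + R 1 ∧ ∀ ρ, R ρ = 1 → V 0 ρ

/-- Second phase of the invariant for two rooms, with key room `K`. -/
def InvTwoB (R : Fin 2 → ℕ) (S : Fin 5 → ℕ) (V : Fin 5 → Fin 2 → Prop) (K K' : Fin 2) : Prop :=
  K ≠ K' ∧ 3 ≤ S 0 ∧ S 0 ≤ 6 ∧ (∀ ρ, V 0 ρ) ∧ R K' = 1 ∧ (R K = 0 ∨ R K = 2) ∧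
    (∀ X, X ≠ 0 → S X ≤ 3) ∧ doneTwo S + 3 = S 0 + (if R K = 0 then 1 else 0) ∧
    (∀ X, X ≠ 0 → 1 ≤ S X → V X K) ∧ (∀ X, X ≠ 0 → 2 ≤ S X → V X K')

theorem fin_two_cases {K K' : Fin 2} (h : K ≠ K') (ρ : Fin 2) : ρ = K ∨ ρ = K' := by
  omega

theorem winning_two : Winning (n := 5) (r := 2) (mkStrat actTwo) := by
  apply winning_of_inv actTwo
    (fun R S V => InvTwoA R S V ∨ ∃ K K', InvTwoB R S V K K') 7
  · left
    simp [InvTwoA]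
  · rintro R S V V' h (⟨h1, h2, h3, h4⟩ | ⟨K, K', h1, h2, h3, h4, h5, h6, h7, h8, h9, h10⟩)
    · exact Or.inl ⟨h1, h2, h3, fun ρ h' => h _ _ (h4 ρ h')⟩
    · exact Or.inr ⟨K, K', h1, h2, h3, fun ρ => h _ _ (h4 ρ), h5, h6, h7, h8,
        fun X a b => h _ _ (h9 X a b), fun X a b => h _ _ (h10 X a b)⟩
  · rintro R S V p ρ (⟨h1, h2, h3, h4⟩ | ⟨K, K', h1, h2, h3, h4, h5, h6, h7, h8, h9, h10⟩)
    · have r0 := h2 0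
      have r1 := h2 1
      have rr := h2 ρ
      by_cases hp : p = 0
      · subst hp
        by_cases hc : S 0 < 2 ∧ R ρ = 0
        · right
          have ha : actTwo 0 (S 0) (R ρ) = (S 0 + 1, 1, false) := by
            simp [actTwo, hc]
          rw [ha]
          refine ⟨by simp, by simp; omega, by simp, fun _ => Or.inl ⟨?_, ?_, ?_, ?_⟩⟩
          · intro X hX
            simpa [hX] using h1 X hX
          · intro ρ'
            have := h2 ρ'
            simp only [Function.update_apply]
            split_ifs <;> omega
          · obtain ⟨hc1, hc2⟩ := hc
            fin_cases ρ <;> simp [Function.update_apply] at * <;> omega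
          · intro ρ' h'
            by_cases hρ : ρ' = ρ
            · exact Or.inr ⟨rfl, hρ⟩
            · exact Or.inl (h4 ρ' (by simpa [hρ] using h'))
        · by_cases hc2 : S 0 = 2 ∧ R ρ = 1
          · right
            have ha : actTwo 0 (S 0) (R ρ) = (3, 2, false) := by
              simp [actTwo, hc2]
            rw [ha]
            refine ⟨by simp [hc2], by simp, by simp, fun _ => Or.inr ?_⟩
            have h01 : R 0 = 1 ∧ R 1 = 1 := by omega
            have hall : ∀ ρ', R ρ' = 1 := by
              intro ρ'
              fin_cases ρ'
              · exact h01.1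
              · exact h01.2
            obtain ⟨ρ₂, hne⟩ : ∃ ρ₂, ρ ≠ ρ₂ := by
              obtain ⟨x, hx⟩ := exists_ne ρ
              exact ⟨x, hx.symm⟩
            refine ⟨ρ, ρ₂, hne, by simp, by simp, fun ρ' => Or.inl (h4 _ (hall _)), ?_, by simp,
              ?_, ?_, ?_, ?_⟩
            · simp [Function.update_of_ne hne.symm, hall]
            · intro X hX
              simp [hX, h1]
            · simp [doneTwo, h1]
            · intro X hX hh
              simp [hX, h1] at hh
            · intro X hX hh
              simp [hX, h1] at hh
          · left
            have hc3 : ¬ (3 ≤ S 0 ∧ S 0 ≤ 6 ∧ R ρ = 0) := by omega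
            simp only [actTwo, if_true, if_neg hc, if_neg hc2, if_neg hc3]
      · left
        have e : R ρ ≠ 2 := by omega
        simp [actTwo, hp, h1 p hp, e]
    · have rr : (ρ = K ∨ ρ = K') := fin_two_cases h1 ρ
      by_cases hp : p = 0
      · subst hp
        by_cases hc : R ρ = 0
        · have hK : ρ = K := by
            rcases rr with h | h
            · exact h
            · subst h; omega
          subst hK
          right
          have ha : actTwo 0 (S 0) (R ρ) = (S 0 + 1, 2, decide (S 0 = 6)) := by
            have q1 : ¬ (S 0 < 2) := by omega
            have q2 : ¬ (S 0 = 2) := by omega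
            simp [actTwo, hc, q1, q2, h2, h3]
          rw [ha]
          rw [if_pos hc] at h8
          refine ⟨by simp, by simp; omega, ?_, ?_⟩
          · intro hd
            have hd' : S 0 = 6 := by simpa using hd
            have hall : ∀ X, X ≠ 0 → S X = 3 := by
              unfold doneTwo at h8
              have : S 1 = 3 ∧ S 2 = 3 ∧ S 3 = 3 ∧ S 4 = 3 := by
                split_ifs at h8 <;> omega
              intro X hX
              fin_cases X <;> simp_all
            intro p' ρ'
            left
            by_cases hp' : p' = 0
            · subst hp'; exact h4 _
            · rcases fin_two_cases h1 ρ' with h | h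
              · subst h; exact h9 _ hp' (by rw [hall _ hp']; omega)
              · subst h; exact h10 _ hp' (by rw [hall _ hp']; omega)
          · intro hd
            have hd' : S 0 ≠ 6 := by simpa using hd
            refine Or.inr ⟨ρ, K', h1, ?_, ?_, fun ρ' => Or.inl (h4 ρ'), ?_, by simp, ?_, ?_, ?_, ?_⟩
            · simp; omega
            · simp; omega
            · simpa [Function.update_of_ne h1.symm] using h5
            · intro X hX
              simpa [hX] using h7 X hX
            · unfold doneTwo at h8 ⊢
              simp; omega
            · intro X hX hh
              exact Or.inl (h9 X hX (by simpa [hX] using hh))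
            · intro X hX hh
              exact Or.inl (h10 X hX (by simpa [hX] using hh))
        · left
          have q1 : ¬ (S 0 = 2) := by omega
          simp [actTwo, hc, q1]
      · have hp7 := h7 p hp
        by_cases hc : S p = 0 ∧ R ρ = 2
        · have hK : ρ = K := by
            rcases rr with h | h
            · exact h
            · subst h; omega
          subst hK
          right
          have ha : actTwo p (S p) (R ρ) = (1, 2, false) := by
            simp [actTwo, hc, hp]
          rw [ha]
          refine ⟨by simp [hc], by simp, by simp, fun _ => Or.inr ⟨ρ, K', h1, ?_, ?_,
            fun ρ' => Or.inl (h4 ρ'), ?_, by simp, ?_, ?_, ?_, ?_⟩⟩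
          · simpa [Function.update_of_ne (Ne.symm hp)] using h2
          · simpa [Function.update_of_ne (Ne.symm hp)] using h3
          · simpa [Function.update_of_ne h1.symm] using h5
          · intro X hX
            by_cases hXp : X = p
            · subst hXp; simp
            · simpa [hXp] using h7 X hX
          · obtain ⟨hc1, hc2⟩ := hc
            unfold doneTwo at h8 ⊢
            fin_cases p <;> simp [Function.update_apply, hc2] at * <;>
              simp [hc1] at h8 <;> omega
          · intro X hX hh
            by_cases hXp : X = p
            · exact Or.inr ⟨hXp, rfl⟩
            · exact Or.inl (h9 X hX (by simpa [hXp] using hh))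
          · intro X hX hh
            by_cases hXp : X = p
            · subst hXp; simp at hh
            · exact Or.inl (h10 X hX (by simpa [hXp] using hh))
        · by_cases hc' : S p = 1 ∧ R ρ = 1
          · have hK : ρ = K' := by
              rcases rr with h | h
              · subst h; omega
              · exact h
            subst hK
            right
            have ha : actTwo p (S p) (R ρ) = (2, 1, false) := by
              simp [actTwo, hc', hp]
            rw [ha]
            refine ⟨by simp [hc'], by simp, by simp, fun _ => Or.inr ⟨K, ρ, h1, ?_, ?_,
              fun ρ' => Or.inl (h4 ρ'), by simp, ?_, ?_, ?_, ?_, ?_⟩⟩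
            · simpa [Function.update_of_ne (Ne.symm hp)] using h2
            · simpa [Function.update_of_ne (Ne.symm hp)] using h3
            · simpa [Function.update_of_ne h1] using h6
            · intro X hX
              by_cases hXp : X = p
              · subst hXp; simp
              · simpa [hXp] using h7 X hX
            · obtain ⟨hc1, hc2⟩ := hc'
              rw [Function.update_of_ne h1]
              unfold doneTwo at h8 ⊢
              clear ha
              generalize (if R K = 0 then 1 else 0) = z at *
              fin_cases p <;> simp [Function.update_apply] at * <;>
                simp [hc1] at h8 <;> omega
            · intro X hX hh
              by_cases hXp : X = p
              · subst hXp
                exact Or.inl (h9 X hX (by omega))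
              · exact Or.inl (h9 X hX (by simpa [hXp] using hh))
            · intro X hX hh
              by_cases hXp : X = p
              · exact Or.inr ⟨hXp, rfl⟩
              · exact Or.inl (h10 X hX (by simpa [hXp] using hh))
          · by_cases hc'' : S p = 2 ∧ R ρ = 2
            · have hK : ρ = K := by
                rcases rr with h | h
                · exact h
                · subst h; omega
              subst hK
              right
              have ha : actTwo p (S p) (R ρ) = (3, 0, false) := by
                simp [actTwo, hc'', hp]
              rw [ha]
              refine ⟨by simp [hc''], by simp, by simp, fun _ => Or.inr ⟨ρ, K', h1, ?_, ?_,
                fun ρ' => Or.inl (h4 ρ'), ?_, by simp, ?_, ?_, ?_, ?_⟩⟩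
              · simpa [Function.update_of_ne (Ne.symm hp)] using h2
              · simpa [Function.update_of_ne (Ne.symm hp)] using h3
              · simpa [Function.update_of_ne h1.symm] using h5
              · intro X hX
                by_cases hXp : X = p
                · subst hXp; simp
                · simpa [hXp] using h7 X hX
              · obtain ⟨hc1, hc2⟩ := hc''
                unfold doneTwo at h8 ⊢
                clear ha
                fin_cases p <;> simp [Function.update_apply, hc2] at * <;>
                  simp [hc1] at h8 <;> omega
              · intro X hX hh
                by_cases hXp : X = p
                · exact Or.inr ⟨hXp, rfl⟩
                · exact Or.inl (h9 X hX (by simpa [hXp] using hh))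
              · intro X hX hh
                by_cases hXp : X = p
                · subst hXp
                  exact Or.inl (h10 X hX (by omega))
                · exact Or.inl (h10 X hX (by simpa [hXp] using hh))
            · left
              simp only [actTwo, if_neg hp, if_neg hc, if_neg hc', if_neg hc'']
  · rintro R S V (⟨h1, h2, h3, h4⟩ | ⟨K, K', h1, h2, h3, h4, h5, h6, h7, h8, h9, h10⟩)
    · have r0 := h2 0
      have r1 := h2 1
      by_cases hz : R 0 = 0
      · refine ⟨0, 0, ?_⟩
        have : S 0 < 2 := by omega
        simp [actTwo, hz, this]
      · by_cases hz' : R 1 = 0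
        · refine ⟨0, 1, ?_⟩
          have : S 0 < 2 := by omega
          simp [actTwo, hz', this]
        · refine ⟨0, 0, ?_⟩
          have e1 : R 0 = 1 := by omega
          have e2 : S 0 = 2 := by omega
          simp [actTwo, e1, e2]
    · rcases h6 with h6 | h6
      · refine ⟨0, K, ?_⟩
        have q1 : ¬ (S 0 < 2) := by omega
        have q2 : ¬ (S 0 = 2) := by omega
        simp [actTwo, h6, q1, q2, h2, h3]
      · have : ∃ X : Fin 5, X ≠ 0 ∧ S X ≠ 3 := by
          by_contra hno
          push Not at hno
          simp [doneTwo, hno, h6] at h8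
          omega
        obtain ⟨X, hX, hS⟩ := this
        have := h7 X hX
        have : S X = 0 ∨ S X = 1 ∨ S X = 2 := by omega
        rcases this with h | h | h
        · exact ⟨X, K, by simp [actTwo, hX, h, h6]⟩
        · exact ⟨X, K', by simp [actTwo, hX, h, h5]⟩
        · exact ⟨X, K, by simp [actTwo, hX, h, h6]⟩

end PrisonersGame

namespace PrisonersGame

/-! ### Four or more rooms -/

/-- The protocol of prisoner `0`. -/
def actA (r k s : ℕ) : ℕ × ℕ × Bool :=
  if k < r ∧ s = 0 then (k + 1, 1, false)
  else if k = r ∧ s = 1 then (r + 1, 2, false)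
  else (k, s, false)

/-- The protocol of prisoner `1`. -/
def actB (r k s : ℕ) : ℕ × ℕ × Bool :=
  if k = 0 ∧ s = 2 then (1, 2, false)
  else if 1 ≤ k ∧ k < r ∧ s = 1 then (k + 1, 2, false)
  else if k = r ∧ s = 2 then (r + 1, 0, false)
  else (k, s, false)

/-- The protocol of prisoner `2`. -/
def actC (r k s : ℕ) : ℕ × ℕ × Bool :=
  if k = 0 ∧ s = 2 then (1, 2, false)
  else if k = 1 ∧ s = 0 then (2, 0, false)
  else if 2 ≤ k ∧ k < r ∧ s = 2 then (k + 1, 0, false)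
  else if k = r ∧ s = 2 then (r + 1, 2, false)
  else if k = r + 1 ∧ s = 0 then (r + 2, 1, false)
  else (k, s, false)

/-- The protocol of prisoners `3` and `4`. -/
def actZ (r k s : ℕ) : ℕ × ℕ × Bool :=
  if k = 0 ∧ s = 2 then (1, 2, false)
  else if k = 1 ∧ s = 0 then (2, 0, false)
  else if k = 2 ∧ s = 1 then (3, 0, false)
  else if k = 3 ∧ s = 2 then (4, 2, false)
  else if 3 ≤ k ∧ k ≤ r + 2 ∧ s = 1 then (r + 6, 1, false)
  else if 4 ≤ k ∧ k < r + 2 ∧ s = 0 then (k + 1, 2, false)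
  else if k = r + 2 ∧ s = 0 then (r + 3, 0, false)
  else if r + 3 ≤ k ∧ k ≤ r + 4 ∧ s = 2 then (k + 1, 1, false)
  else if r + 6 ≤ k ∧ k < 2 * r + 5 ∧ s ≠ 1 then (k + 1, 1, decide (k = 2 * r + 4))
  else (k, s, false)

/-- The protocol for at least four rooms. -/
def actMany (r : ℕ) : Act 5 := fun p k s =>
  if p = 0 then actA r k s
  else if p = 1 then actB r k s
  else if p = 2 then actC r k s
  else actZ r k s

/-- The arithmetic invariant of the final phase, `x` being the stage of the front runner. -/
inductive Zr (r x y n0 n1 n2 : ℕ) : Prop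
  | z0 (h : x ≤ 2 ∧ y ≤ 2 ∧ n0 + 2 = r ∧ n1 = 1 ∧ n2 = 1)
  | za (h : x = 3 ∧ y ≤ 2 ∧ n0 + 1 = r ∧ n1 = 0 ∧ n2 = 1)
  | zb (h : 4 ≤ x ∧ x ≤ r + 2 ∧ y ≤ 2 ∧ n0 + x = r + 3 ∧ n1 = 0 ∧ n2 + 3 = x)
  | zc (h : r + 3 ≤ x ∧ x ≤ r + 5 ∧ y ≤ 2 ∧ n0 = 1 ∧ n1 + r + 3 = x ∧ n0 + n1 + n2 = r)
  | zd (h : r + 4 ≤ x ∧ x ≤ r + 5 ∧ n1 + r + 4 = x ∧ y = 3 ∧ n0 = 2 ∧ n0 + n1 + n2 = r)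
  | ze (h : r + 4 ≤ x ∧ x ≤ r + 5 ∧ n1 + r + 4 = x ∧ 4 ≤ y ∧ n0 + y = 6 ∧ n0 + n1 + n2 = r)
  | zf (h : x = r + 5 ∧ r + 6 ≤ y ∧ y < 2 * r + 5 ∧ n1 + r + 5 = y ∧ n0 + n1 + n2 = r)

/-- The arithmetic invariant. -/
inductive Ar (r a b c d e n0 n1 n2 : ℕ) : Prop
  | p1 (h : a ≤ r ∧ b = 0 ∧ c = 0 ∧ d = 0 ∧ e = 0 ∧ n0 + a = r ∧ n1 = a ∧ n2 = 0)
  | p2a (h : a = r + 1 ∧ b = 0 ∧ c ≤ 1 ∧ d ≤ 1 ∧ e ≤ 1 ∧ n0 = 0 ∧ n1 + n2 = r ∧ n2 = 1)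
  | p2b (h : a = r + 1 ∧ 1 ≤ b ∧ b ≤ r ∧ c ≤ 1 ∧ d ≤ 1 ∧ e ≤ 1 ∧ n0 = 0 ∧ n1 + n2 = r ∧ n2 = b)
  | p3a (h : a = r + 1 ∧ b = r + 1 ∧ c ≤ 1 ∧ d ≤ 2 ∧ e ≤ 2 ∧ n1 = 0 ∧ n0 + n2 = r ∧ n0 = 1)
  | p3b (h : a = r + 1 ∧ b = r + 1 ∧ 2 ≤ c ∧ c ≤ r ∧ d ≤ 2 ∧ e ≤ 2 ∧ n1 = 0 ∧ n0 + n2 = r ∧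
      n0 + 1 = c)
  | p3c (h : a = r + 1 ∧ b = r + 1 ∧ c = r + 1 ∧ d ≤ 2 ∧ e ≤ 2 ∧ n1 = 0 ∧ n0 + n2 = r ∧
      n0 + 1 = r)
  | z (h : a = r + 1 ∧ b = r + 1 ∧ c = r + 2) (hz : Zr r d e n0 n1 n2)
  | z' (h : a = r + 1 ∧ b = r + 1 ∧ c = r + 2) (hz : Zr r e d n0 n1 n2)

theorem Ar.symm {r a b c d e n0 n1 n2 : ℕ} (h : Ar r a b c d e n0 n1 n2) :
    Ar r a b c e d n0 n1 n2 := by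
  rcases h with h | h | h | h | h | h | ⟨h, hz⟩ | ⟨h, hz⟩
  · exact .p1 (by omega)
  · exact .p2a (by omega)
  · exact .p2b (by omega)
  · exact .p3a (by omega)
  · exact .p3b (by omega)
  · exact .p3c (by omega)
  · exact .z' h hz
  · exact .z h hz

theorem Ar.sum {r a b c d e n0 n1 n2 : ℕ} (h : Ar r a b c d e n0 n1 n2) : n0 + n1 + n2 = r := by
  rcases h with h | h | h | h | h | h | ⟨h, hz⟩ | ⟨h, hz⟩
  iterate 6 omega
  · rcases hz with h | h | h | h | h | h | h <;> omega
  · rcases hz with h | h | h | h | h | h | h <;> omega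

/-- Everything about prisoner `0`, `1`, `2` in the final phase and before. -/
theorem Ar.info {r a b c d e n0 n1 n2 : ℕ} (hr : 4 ≤ r) (h : Ar r a b c d e n0 n1 n2) :
    (a ≤ r → b = 0 ∧ c = 0 ∧ d = 0 ∧ e = 0 ∧ n0 + a = r ∧ n1 = a ∧ n2 = 0) ∧ a ≤ r + 1 ∧
    (b ≤ r → c ≤ 1 ∧ d ≤ 1 ∧ e ≤ 1) ∧ b ≤ r + 1 ∧ (1 ≤ b → b ≤ r → n0 = 0 ∧ n2 = b) ∧
    (a = r + 1 → b = 0 → n0 = 0 ∧ n2 = 1) ∧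
    (c ≤ r + 1 → d ≤ 2 ∧ e ≤ 2) ∧ c ≤ r + 2 ∧
    (b = r + 1 → c ≤ 1 → n1 = 0 ∧ n0 = 1) ∧
    (2 ≤ c → c ≤ r → n1 = 0 ∧ n0 + 1 = c) ∧ (c = r + 1 → n1 = 0 ∧ n0 + 1 = r) := by
  have hs := h.sum
  rcases h with h | h | h | h | h | h | ⟨h, hz⟩ | ⟨h, hz⟩
  all_goals
    refine ⟨?_, ?_, ?_, ?_, ?_, ?_, ?_, ?_, ?_, ?_, ?_⟩ <;> omega

theorem Ar.infoZ {r a b c d e n0 n1 n2 : ℕ} (hr : 4 ≤ r) (h : Ar r a b c d e n0 n1 n2)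
    (hd : 3 ≤ d) : a = r + 1 ∧ b = r + 1 ∧ c = r + 2 ∧
    (d = 3 → e ≤ 2 → n2 = 1 ∧ n1 = 0) ∧
    (4 ≤ d → d ≤ r + 2 → e ≤ 2 → n0 + d = r + 3 ∧ n1 = 0 ∧ n2 + 3 = d) ∧
    (3 ≤ d → d ≤ r + 2 → 3 ≤ e → r + 4 ≤ e ∧ e ≤ r + 5 ∧ n1 + r + 4 = e ∧ d ≤ 6 ∧
      (d = 3 → n0 = 2) ∧ (4 ≤ d → n0 + d = 6)) ∧
    (r + 3 ≤ d → d ≤ r + 4 → (e ≤ 2 ∧ n0 = 1 ∧ n1 + r + 3 = d) ∨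
      (3 ≤ e ∧ e ≤ 6 ∧ d = r + 4 ∧ n1 = 0)) ∧
    (r + 6 ≤ d → d < 2 * r + 5 ∧ e = r + 5 ∧ n1 + r + 5 = d) := by
  have hs := h.sum
  rcases h with h | h | h | h | h | h | ⟨h, hz⟩ | ⟨h, hz⟩
  iterate 6 omega
  all_goals
    rcases hz with h | h | h | h | h | h | h
    all_goals
      refine ⟨?_, ?_, ?_, ?_, ?_, ?_, ?_, ?_⟩ <;> omega

section trans
variable {r a b c d e n0 n1 n2 m0 m1 m2 : ℕ}

theorem tA1 (hr : 4 ≤ r) (h : Ar r a b c d e n0 n1 n2) (ha : a < r)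
    (hm : m0 + 1 = n0 ∧ m1 = n1 + 1 ∧ m2 = n2) : Ar r (a + 1) b c d e m0 m1 m2 := by
  have := h.info hr
  exact .p1 (by omega)

theorem tA2 (hr : 4 ≤ r) (h : Ar r a b c d e n0 n1 n2) (ha : a = r)
    (hm : m0 = n0 ∧ m1 + 1 = n1 ∧ m2 = n2 + 1) : Ar r (r + 1) b c d e m0 m1 m2 := by
  have := h.info hr
  exact .p2a (by omega)

theorem tB0 (hr : 4 ≤ r) (h : Ar r a b c d e n0 n1 n2) (hb : b = 0)
    (hn : 1 ≤ n2) : Ar r a 1 c d e n0 n1 n2 := by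
  have := h.info hr
  have := h.sum
  exact .p2b (by omega)

theorem tB1 (hr : 4 ≤ r) (h : Ar r a b c d e n0 n1 n2) (hb : 1 ≤ b ∧ b < r)
    (hm : m0 = n0 ∧ m1 + 1 = n1 ∧ m2 = n2 + 1) : Ar r a (b + 1) c d e m0 m1 m2 := by
  have := h.info hr
  have := h.sum
  exact .p2b (by omega)

theorem tB2 (hr : 4 ≤ r) (h : Ar r a b c d e n0 n1 n2) (hb : b = r)
    (hm : m0 = n0 + 1 ∧ m1 = n1 ∧ m2 + 1 = n2) : Ar r a (r + 1) c d e m0 m1 m2 := by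
  have := h.info hr
  have := h.sum
  exact .p3a (by omega)

theorem tC0 (hr : 4 ≤ r) (h : Ar r a b c d e n0 n1 n2) (hc : c = 0)
    (hn : 1 ≤ n2) : Ar r a b 1 d e n0 n1 n2 := by
  have := h.info hr
  have := h.sum
  rcases h with h | h | h | h | h | h | ⟨h, hz⟩ | ⟨h, hz⟩
  · omega
  · exact .p2a (by omega)
  · exact .p2b (by omega)
  · exact .p3a (by omega)
  all_goals omega

theorem tC1 (hr : 4 ≤ r) (h : Ar r a b c d e n0 n1 n2) (hc : c = 1)
    (hn : 1 ≤ n0) : Ar r a b 2 d e n0 n1 n2 := by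
  have := h.info hr
  have := h.sum
  exact .p3b (by omega)

theorem tC2 (hr : 4 ≤ r) (h : Ar r a b c d e n0 n1 n2) (hc : 2 ≤ c ∧ c < r)
    (hm : m0 = n0 + 1 ∧ m1 = n1 ∧ m2 + 1 = n2) : Ar r a b (c + 1) d e m0 m1 m2 := by
  have := h.info hr
  have := h.sum
  exact .p3b (by omega)

theorem tC3 (hr : 4 ≤ r) (h : Ar r a b c d e n0 n1 n2) (hc : c = r)
    (hn : 1 ≤ n2) : Ar r a b (r + 1) d e n0 n1 n2 := by
  have := h.info hr
  have := h.sum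
  exact .p3c (by omega)

theorem tC4 (hr : 4 ≤ r) (h : Ar r a b c d e n0 n1 n2) (hc : c = r + 1)
    (hm : m0 + 1 = n0 ∧ m1 = n1 + 1 ∧ m2 = n2) : Ar r a b (r + 2) d e m0 m1 m2 := by
  have := h.info hr
  have := h.sum
  exact .z (by omega) (.z0 (by omega))

theorem tZ0 (hr : 4 ≤ r) (h : Ar r a b c d e n0 n1 n2) (hd : d = 0)
    (hn : 1 ≤ n2) : Ar r a b c 1 e n0 n1 n2 := by
  rcases h with h | h | h | h | h | h | ⟨h, hz⟩ | ⟨h, hz⟩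
  · omega
  · exact .p2a (by omega)
  · exact .p2b (by omega)
  · exact .p3a (by omega)
  · exact .p3b (by omega)
  · exact .p3c (by omega)
  · rcases hz with g | g | g | g | g | g | g <;> try omega
    exact .z h (.z0 (by omega))
  · rcases hz with g | g | g | g | g | g | g <;> try omega
    · exact .z' h (.z0 (by omega))
    · exact .z' h (.za (by omega))
    · exact .z' h (.zb (by omega))
    · exact .z' h (.zc (by omega))

theorem tZ1 (hr : 4 ≤ r) (h : Ar r a b c d e n0 n1 n2) (hd : d = 1)
    (hn : 1 ≤ n0) : Ar r a b c 2 e n0 n1 n2 := by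
  rcases h with h | h | h | h | h | h | ⟨h, hz⟩ | ⟨h, hz⟩
  · omega
  · omega
  · omega
  · exact .p3a (by omega)
  · exact .p3b (by omega)
  · exact .p3c (by omega)
  · rcases hz with g | g | g | g | g | g | g <;> try omega
    exact .z h (.z0 (by omega))
  · rcases hz with g | g | g | g | g | g | g <;> try omega
    · exact .z' h (.z0 (by omega))
    · exact .z' h (.za (by omega))
    · exact .z' h (.zb (by omega))
    · exact .z' h (.zc (by omega))

theorem tZ2 (hr : 4 ≤ r) (h : Ar r a b c d e n0 n1 n2) (hd : d = 2)
    (hm : m0 = n0 + 1 ∧ m1 + 1 = n1 ∧ m2 = n2) : Ar r a b c 3 e m0 m1 m2 := by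
  rcases h with h | h | h | h | h | h | ⟨h, hz⟩ | ⟨h, hz⟩ <;> try omega
  · rcases hz with g | g | g | g | g | g | g <;> try omega
    exact .z h (.za (by omega))
  · rcases hz with g | g | g | g | g | g | g <;> try omega
    · exact .z h (.za (by omega))
    · exact .z' h (.zd (by omega))

theorem tZ3 (hr : 4 ≤ r) (h : Ar r a b c d e n0 n1 n2) (hd : d = 3)
    (hn : 1 ≤ n2) : Ar r a b c 4 e n0 n1 n2 := by
  rcases h with h | h | h | h | h | h | ⟨h, hz⟩ | ⟨h, hz⟩ <;> try omega
  · rcases hz with g | g | g | g | g | g | g <;> try omega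
    exact .z h (.zb (by omega))
  · rcases hz with g | g | g | g | g | g | g <;> try omega
    exact .z' h (.ze (by omega))

theorem tZ4 (hr : 4 ≤ r) (h : Ar r a b c d e n0 n1 n2) (hd : 3 ≤ d ∧ d ≤ r + 2)
    (hn : 1 ≤ n1) : Ar r a b c (r + 6) e n0 n1 n2 := by
  rcases h with h | h | h | h | h | h | ⟨h, hz⟩ | ⟨h, hz⟩ <;> try omega
  · rcases hz with g | g | g | g | g | g | g <;> omega
  · rcases hz with g | g | g | g | g | g | g <;> try omega
    · exact .z' h (.zf (by omega))
    · exact .z' h (.zf (by omega))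

theorem tZ5 (hr : 4 ≤ r) (h : Ar r a b c d e n0 n1 n2) (hd : 4 ≤ d ∧ d < r + 2)
    (hm : m0 + 1 = n0 ∧ m1 = n1 ∧ m2 = n2 + 1) : Ar r a b c (d + 1) e m0 m1 m2 := by
  rcases h with h | h | h | h | h | h | ⟨h, hz⟩ | ⟨h, hz⟩ <;> try omega
  · rcases hz with g | g | g | g | g | g | g <;> try omega
    exact .z h (.zb (by omega))
  · rcases hz with g | g | g | g | g | g | g <;> try omega
    exact .z' h (.ze (by omega))

theorem tZ6 (hr : 4 ≤ r) (h : Ar r a b c d e n0 n1 n2) (hd : d = r + 2)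
    (hn : 1 ≤ n0) : Ar r a b c (r + 3) e n0 n1 n2 := by
  rcases h with h | h | h | h | h | h | ⟨h, hz⟩ | ⟨h, hz⟩ <;> try omega
  · rcases hz with g | g | g | g | g | g | g <;> try omega
    exact .z h (.zc (by omega))
  · rcases hz with g | g | g | g | g | g | g <;> omega

theorem tZ7 (hr : 4 ≤ r) (h : Ar r a b c d e n0 n1 n2) (hd : r + 3 ≤ d ∧ d ≤ r + 4)
    (hm : m0 = n0 ∧ m1 = n1 + 1 ∧ m2 + 1 = n2) : Ar r a b c (d + 1) e m0 m1 m2 := by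
  rcases h with h | h | h | h | h | h | ⟨h, hz⟩ | ⟨h, hz⟩ <;> try omega
  · rcases hz with g | g | g | g | g | g | g <;> try omega
    · exact .z h (.zc (by omega))
    · exact .z h (.zd (by omega))
    · exact .z h (.ze (by omega))
  · rcases hz with g | g | g | g | g | g | g <;> omega

theorem tZ8 (hr : 4 ≤ r) (h : Ar r a b c d e n0 n1 n2) (hd : r + 6 ≤ d ∧ d < 2 * r + 4)
    (hm : m0 + m2 + 1 = n0 + n2 ∧ m1 = n1 + 1) : Ar r a b c (d + 1) e m0 m1 m2 := by
  rcases h with h | h | h | h | h | h | ⟨h, hz⟩ | ⟨h, hz⟩ <;> try omega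
  · rcases hz with g | g | g | g | g | g | g <;> omega
  · rcases hz with g | g | g | g | g | g | g <;> try omega
    exact .z' h (.zf (by omega))

end trans

/-! Counting rooms of a colour. -/

/-- Number of rooms of colour `i`. -/
def cnt {r : ℕ} (R : Fin r → ℕ) (i : ℕ) : ℕ := (Finset.univ.filter (fun ρ => R ρ = i)).card

theorem cnt_update {r : ℕ} (R : Fin r → ℕ) (ρ : Fin r) (w i : ℕ) :
    cnt (Function.update R ρ w) i + (if R ρ = i then 1 else 0) =
      cnt R i + (if w = i then 1 else 0) := by
  have key : ∀ Q : Fin r → ℕ, cnt Q i = (if Q ρ = i then 1 else 0) +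
      ∑ x ∈ Finset.univ.erase ρ, (if Q x = i then 1 else 0) := by
    intro Q
    unfold cnt
    rw [Finset.card_filter, ← Finset.add_sum_erase _ _ (Finset.mem_univ ρ)]
  rw [key (Function.update R ρ w), key R]
  have : ∑ x ∈ Finset.univ.erase ρ, (if Function.update R ρ w x = i then 1 else 0) =
      ∑ x ∈ Finset.univ.erase ρ, (if R x = i then 1 else 0) := by
    apply Finset.sum_congr rfl
    intro x hx
    rw [Function.update_of_ne (Finset.ne_of_mem_erase hx)]
  rw [this]
  simp only [Function.update_self]
  omega

theorem cnt_pos {r : ℕ} (R : Fin r → ℕ) (ρ : Fin r) {i : ℕ} (h : R ρ = i) : 1 ≤ cnt R i :=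
  Finset.card_pos.mpr ⟨ρ, by simp [h]⟩

theorem exists_of_cnt {r : ℕ} {R : Fin r → ℕ} {i : ℕ} (h : 1 ≤ cnt R i) : ∃ ρ, R ρ = i := by
  obtain ⟨ρ, hρ⟩ := Finset.card_pos.mp h
  exact ⟨ρ, by simpa using hρ⟩

theorem cnt_one {r : ℕ} {R : Fin r → ℕ} {i : ℕ} (h : cnt R i = 1) {ρ ρ' : Fin r}
    (h1 : R ρ = i) (h2 : R ρ' = i) : ρ' = ρ :=
  Finset.card_le_one.mp h.le ρ' (by simp [h2]) ρ (by simp [h1])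

theorem cnt_all {r : ℕ} {R : Fin r → ℕ} {i : ℕ} (h : cnt R i = r) (ρ : Fin r) : R ρ = i := by
  have : Finset.univ.filter (fun ρ => R ρ = i) = Finset.univ := by
    apply Finset.eq_univ_of_card
    simpa [cnt] using h
  have h2 : ρ ∈ Finset.univ.filter (fun ρ => R ρ = i) := by rw [this]; simp
  simpa using h2

theorem cnt_le2 {r : ℕ} {R : Fin r → ℕ} (h : cnt R 0 + cnt R 1 + cnt R 2 = r) (ρ : Fin r) :
    R ρ = 0 ∨ R ρ = 1 ∨ R ρ = 2 := by
  by_contra hno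
  push Not at hno
  have e0 := cnt_update R ρ 0 0
  have hall : ∀ Q : Fin r → ℕ, cnt Q 0 + cnt Q 1 + cnt Q 2 ≤ r := by
    intro Q
    have : cnt Q 0 + cnt Q 1 + cnt Q 2 = ∑ x : Fin r,
        ((if Q x = 0 then 1 else 0) + (if Q x = 1 then 1 else 0) +
          (if Q x = 2 then 1 else 0)) := by
      simp only [cnt, Finset.card_filter, Finset.sum_add_distrib]
    rw [this]
    calc _ ≤ ∑ x : Fin r, 1 := by
          apply Finset.sum_le_sum
          intro x _
          split_ifs <;> omega
      _ = r := by simp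
  have e1 := cnt_update R ρ 0 1
  have e2 := cnt_update R ρ 0 2
  have := hall (Function.update R ρ 0)
  simp [hno] at e0 e1 e2
  omega

/-- All rooms except `ρ` have colour `i`. -/
theorem cnt_all_but {r : ℕ} {R : Fin r → ℕ} {i : ℕ} (h : cnt R i + 1 = r) {ρ : Fin r}
    (hρ : R ρ ≠ i) (ρ' : Fin r) (hne : ρ' ≠ ρ) : R ρ' = i := by
  have e := cnt_update R ρ i i
  simp [hρ] at e
  have := cnt_all (R := Function.update R ρ i) (i := i) (by omega) ρ'
  simpa [hne] using this

end PrisonersGame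

namespace PrisonersGame

/-- Prisoner `p` has visited all rooms of colour `i`. -/
def Sb {r : ℕ} (V : Fin 5 → Fin r → Prop) (R : Fin r → ℕ) (p : Fin 5) (i : ℕ) : Prop :=
  ∀ ρ, R ρ = i → V p ρ

theorem Sb.step {r : ℕ} {V : Fin 5 → Fin r → Prop} {R : Fin r → ℕ} {p' : Fin 5} {i : ℕ}
    (h : Sb V R p' i) (p : Fin 5) (ρ : Fin r) (w : ℕ) (hw : w = i → p' = p ∨ R ρ = i) :
    Sb (vis V p ρ) (Function.update R ρ w) p' i := by
  intro ρ' h'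
  by_cases hρ : ρ' = ρ
  · subst hρ
    simp only [Function.update_self] at h'
    rcases hw h' with h2 | h2
    · exact Or.inr ⟨h2, rfl⟩
    · exact Or.inl (h _ h2)
  · exact Or.inl (h _ (by simpa [hρ] using h'))

theorem Sb.new {r : ℕ} {V : Fin 5 → Fin r → Prop} {R : Fin r → ℕ} {i : ℕ}
    (p : Fin 5) (ρ : Fin r) (w : ℕ) (h1 : cnt R i = 1) (h2 : R ρ = i) :
    Sb (vis V p ρ) (Function.update R ρ w) p i := by
  intro ρ' h'
  by_cases hρ : ρ' = ρ
  · exact Or.inr ⟨rfl, hρ⟩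
  · rw [Function.update_of_ne hρ] at h'
    exact absurd (cnt_one h1 h2 h') hρ

theorem Sb.full {r : ℕ} {V : Fin 5 → Fin r → Prop} {R : Fin r → ℕ} {p : Fin 5} {i : ℕ}
    (h : Sb V R p i) (ρ : Fin r) (hc : cnt R i = r ∨ (cnt R i + 1 = r ∧ R ρ ≠ i)) (ρ' : Fin r) :
    vis V p ρ p ρ' := by
  rcases hc with hc | ⟨hc, hne⟩
  · exact Or.inl (h _ (cnt_all hc _))
  · by_cases hρ : ρ' = ρ
    · exact Or.inr ⟨rfl, hρ⟩
    · exact Or.inl (h _ (cnt_all_but hc hne _ hρ))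

/-- `X` and `Y` are the two prisoners `3` and `4`. -/
def Pr (X Y : Fin 5) : Prop := (X = 3 ∧ Y = 4) ∨ (X = 4 ∧ Y = 3)

/-- The invariant for at least four rooms. -/
structure InvMany (r : ℕ) (R : Fin r → ℕ) (S : Fin 5 → ℕ) (V : Fin 5 → Fin r → Prop) : Prop where
  ar : ∀ X Y, Pr X Y → Ar r (S 0) (S 1) (S 2) (S X) (S Y) (cnt R 0) (cnt R 1) (cnt R 2)
  v0 : S 0 ≤ r → Sb V R 0 1
  w0 : r + 1 ≤ S 0 → ∀ ρ, V 0 ρ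
  v1 : 1 ≤ S 1 → S 1 ≤ r → Sb V R 1 2
  w1 : r + 1 ≤ S 1 → ∀ ρ, V 1 ρ
  v2 : 2 ≤ S 2 → S 2 ≤ r → Sb V R 2 0
  w2 : r + 1 ≤ S 2 → ∀ ρ, V 2 ρ
  vz : ∀ X Y, Pr X Y → 4 ≤ S X → S X ≤ r + 2 → S Y ≤ 2 → Sb V R X 2
  wz : ∀ X Y, Pr X Y → r + 3 ≤ S X → S X ≤ r + 5 → ∀ ρ, V X ρ
  uz : ∀ X Y, Pr X Y → r + 6 ≤ S X → Sb V R X 1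

theorem Pr.ne {X Y : Fin 5} (h : Pr X Y) :
    X ≠ 0 ∧ X ≠ 1 ∧ X ≠ 2 ∧ Y ≠ 0 ∧ Y ≠ 1 ∧ Y ≠ 2 ∧ X ≠ Y ∧ Pr Y X := by
  unfold Pr at *
  rcases h with ⟨rfl, rfl⟩ | ⟨rfl, rfl⟩ <;> decide

theorem Pr.uniq {X Y X' Y' : Fin 5} (h : Pr X Y) (h' : Pr X' Y') :
    (X' = X ∧ Y' = Y) ∨ (X' = Y ∧ Y' = X) := by
  unfold Pr at *
  rcases h with ⟨rfl, rfl⟩ | ⟨rfl, rfl⟩ <;> rcases h' with ⟨rfl, rfl⟩ | ⟨rfl, rfl⟩ <;> decide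

section build
variable {r : ℕ} {R : Fin r → ℕ} {S : Fin 5 → ℕ} {V : Fin 5 → Fin r → Prop}

theorem buildA (I : InvMany r R S V) (ρ : Fin r) (k w : ℕ)
    (har : ∀ X Y, Pr X Y → S X ≤ 2 ∧ S Y ≤ 2 ∧ Ar r k (S 1) (S 2) (S X) (S Y)
      (cnt (Function.update R ρ w) 0) (cnt (Function.update R ρ w) 1)
      (cnt (Function.update R ρ w) 2))
    (hb : S 1 = 0) (hc : S 2 = 0)
    (hv : k ≤ r → Sb (vis V 0 ρ) (Function.update R ρ w) 0 1)
    (hw : r + 1 ≤ k → ∀ ρ', vis V 0 ρ 0 ρ') :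
    InvMany r (Function.update R ρ w) (Function.update S 0 k) (vis V 0 ρ) := by
  have e0 : Function.update S 0 k 0 = k := by simp
  have e1 : Function.update S 0 k 1 = S 1 := by simp
  have e2 : Function.update S 0 k 2 = S 2 := by simp
  have eX : ∀ X Y, Pr X Y → Function.update S 0 k X = S X ∧ Function.update S 0 k Y = S Y := by
    intro X Y h
    simp [h.ne]
  constructor
  · intro X Y h
    rw [e0, e1, e2, (eX X Y h).1, (eX X Y h).2]
    exact (har X Y h).2.2
  · rw [e0]; exact hv
  · rw [e0]; exact hw
  · rw [e1]; omega
  · rw [e1]; omega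
  · rw [e2]; omega
  · rw [e2]; omega
  · intro X Y h
    rw [(eX X Y h).1]
    have := har X Y h
    omega
  · intro X Y h
    rw [(eX X Y h).1]
    have := har X Y h
    omega
  · intro X Y h
    rw [(eX X Y h).1]
    have := har X Y h
    omega

theorem buildB (I : InvMany r R S V) (ρ : Fin r) (k w : ℕ)
    (har : ∀ X Y, Pr X Y → S X ≤ 2 ∧ S Y ≤ 2 ∧ Ar r (S 0) k (S 2) (S X) (S Y)
      (cnt (Function.update R ρ w) 0) (cnt (Function.update R ρ w) 1)
      (cnt (Function.update R ρ w) 2))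
    (hb : S 0 = r + 1) (hc : S 2 ≤ 1) (hr : 4 ≤ r)
    (hv : 1 ≤ k → k ≤ r → Sb (vis V 1 ρ) (Function.update R ρ w) 1 2)
    (hw : r + 1 ≤ k → ∀ ρ', vis V 1 ρ 1 ρ') :
    InvMany r (Function.update R ρ w) (Function.update S 1 k) (vis V 1 ρ) := by
  have e0 : Function.update S 1 k 0 = S 0 := by simp
  have e1 : Function.update S 1 k 1 = k := by simp
  have e2 : Function.update S 1 k 2 = S 2 := by simp
  have eX : ∀ X Y, Pr X Y → Function.update S 1 k X = S X ∧ Function.update S 1 k Y = S Y := by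
    intro X Y h
    simp [h.ne]
  constructor
  · intro X Y h
    rw [e0, e1, e2, (eX X Y h).1, (eX X Y h).2]
    exact (har X Y h).2.2
  · rw [e0]; omega
  · rw [e0]; exact fun h ρ' => Or.inl (I.w0 h ρ')
  · rw [e1]; exact hv
  · rw [e1]; exact hw
  · rw [e2]; omega
  · rw [e2]; omega
  · intro X Y h
    rw [(eX X Y h).1]
    have := har X Y h
    omega
  · intro X Y h
    rw [(eX X Y h).1]
    have := har X Y h
    omega
  · intro X Y h
    rw [(eX X Y h).1]
    have := har X Y h
    omega

theorem buildC (I : InvMany r R S V) (ρ : Fin r) (k w : ℕ)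
    (har : ∀ X Y, Pr X Y → S X ≤ 2 ∧ S Y ≤ 2 ∧ Ar r (S 0) (S 1) k (S X) (S Y)
      (cnt (Function.update R ρ w) 0) (cnt (Function.update R ρ w) 1)
      (cnt (Function.update R ρ w) 2))
    (hb : S 0 = r + 1) (hc : w = R ρ ∨ S 1 = r + 1) (hr : 4 ≤ r)
    (hv : 2 ≤ k → k ≤ r → Sb (vis V 2 ρ) (Function.update R ρ w) 2 0)
    (hw : r + 1 ≤ k → ∀ ρ', vis V 2 ρ 2 ρ') :
    InvMany r (Function.update R ρ w) (Function.update S 2 k) (vis V 2 ρ) := by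
  have e0 : Function.update S 2 k 0 = S 0 := by simp
  have e1 : Function.update S 2 k 1 = S 1 := by simp
  have e2 : Function.update S 2 k 2 = k := by simp
  have eX : ∀ X Y, Pr X Y → Function.update S 2 k X = S X ∧ Function.update S 2 k Y = S Y := by
    intro X Y h
    simp [h.ne]
  constructor
  · intro X Y h
    rw [e0, e1, e2, (eX X Y h).1, (eX X Y h).2]
    exact (har X Y h).2.2
  · rw [e0]; omega
  · rw [e0]; exact fun h ρ' => Or.inl (I.w0 h ρ')
  · rw [e1]; exact fun h h' => (I.v1 h h').step _ _ _ (by omega)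
  · rw [e1]; exact fun h ρ' => Or.inl (I.w1 h ρ')
  · rw [e2]; exact hv
  · rw [e2]; exact hw
  · intro X Y h
    rw [(eX X Y h).1]
    have := har X Y h
    omega
  · intro X Y h
    rw [(eX X Y h).1]
    have := har X Y h
    omega
  · intro X Y h
    rw [(eX X Y h).1]
    have := har X Y h
    omega

theorem buildZ (I : InvMany r R S V) (X Y : Fin 5) (hXY : Pr X Y) (ρ : Fin r) (k w : ℕ)
    (har : Ar r (S 0) (S 1) (S 2) k (S Y)
      (cnt (Function.update R ρ w) 0) (cnt (Function.update R ρ w) 1)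
      (cnt (Function.update R ρ w) 2))
    (hc : w = R ρ ∨ (S 0 = r + 1 ∧ S 1 = r + 1 ∧ S 2 = r + 2)) (hr : 4 ≤ r)
    (hk : S X ≤ k) (hk2 : k ≤ 2 → w = R ρ) (hY : r + 6 ≤ S Y → w = 1 → R ρ = 1)
    (hv : 4 ≤ k → k ≤ r + 2 → S Y ≤ 2 → Sb (vis V X ρ) (Function.update R ρ w) X 2)
    (hw : r + 3 ≤ k → k ≤ r + 5 → ∀ ρ', vis V X ρ X ρ')
    (hu : r + 6 ≤ k → Sb (vis V X ρ) (Function.update R ρ w) X 1) :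
    InvMany r (Function.update R ρ w) (Function.update S X k) (vis V X ρ) := by
  have hne := hXY.ne
  have e0 : Function.update S X k 0 = S 0 := by simp [hne.1.symm]
  have e1 : Function.update S X k 1 = S 1 := by simp [hne.2.1.symm]
  have e2 : Function.update S X k 2 = S 2 := by simp [hne.2.2.1.symm]
  have eX : Function.update S X k X = k := by simp
  have eY : Function.update S X k Y = S Y := by simp [hne.2.2.2.2.2.2.1.symm]
  constructor
  · intro X' Y' h
    rw [e0, e1, e2]
    rcases hXY.uniq h with ⟨rfl, rfl⟩ | ⟨rfl, rfl⟩
    · rw [eX, eY]; exact har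
    · rw [eX, eY]; exact har.symm
  · rw [e0]; exact fun h => (I.v0 h).step _ _ _ (by omega)
  · rw [e0]; exact fun h ρ' => Or.inl (I.w0 h ρ')
  · rw [e1]; exact fun h h' => (I.v1 h h').step _ _ _ (by omega)
  · rw [e1]; exact fun h ρ' => Or.inl (I.w1 h ρ')
  · rw [e2]; exact fun h h' => (I.v2 h h').step _ _ _ (by omega)
  · rw [e2]; exact fun h ρ' => Or.inl (I.w2 h ρ')
  · intro X' Y' h
    rcases hXY.uniq h with ⟨rfl, rfl⟩ | ⟨rfl, rfl⟩
    · rw [eX, eY]; exact hv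
    · rw [eX, eY]
      exact fun h1 h2 h3 => (I.vz _ _ h h1 h2 (by omega)).step _ _ _
        (fun h4 => Or.inr (by rw [← hk2 h3, h4]))
  · intro X' Y' h
    rcases hXY.uniq h with ⟨rfl, rfl⟩ | ⟨rfl, rfl⟩
    · rw [eX]; exact hw
    · rw [eY]
      exact fun h1 h2 ρ' => Or.inl (I.wz _ _ h h1 h2 ρ')
  · intro X' Y' h
    rcases hXY.uniq h with ⟨rfl, rfl⟩ | ⟨rfl, rfl⟩
    · rw [eX]; exact hu
    · rw [eY]
      exact fun h1 => (I.uz _ _ h h1).step _ _ _ (fun h4 => Or.inr (hY h1 h4))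

end build

theorem upd_same {r : ℕ} {R : Fin r → ℕ} {ρ : Fin r} {w : ℕ} (h : R ρ = w) :
    Function.update R ρ w = R := by
  rw [← h, Function.update_eq_self]

theorem upd_cnt {r : ℕ} {R : Fin r → ℕ} {ρ : Fin r} {s w : ℕ} (h : R ρ = s) (hne : s ≠ w) :
    cnt (Function.update R ρ w) s + 1 = cnt R s ∧ cnt (Function.update R ρ w) w = cnt R w + 1 ∧
    ∀ i, i ≠ s → i ≠ w → cnt (Function.update R ρ w) i = cnt R i := by
  refine ⟨?_, ?_, ?_⟩
  · have := cnt_update R ρ w s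
    simpa [h, hne.symm] using this
  · have := cnt_update R ρ w w
    simpa [h, hne] using this
  · intro i h1 h2
    have := cnt_update R ρ w i
    simpa [h, h1.symm, h2.symm] using this

theorem pr34 : Pr 3 4 := Or.inl ⟨rfl, rfl⟩

/-- The conclusion of a step. -/
def StepOK (r : ℕ) (R : Fin r → ℕ) (S : Fin 5 → ℕ) (V : Fin 5 → Fin r → Prop)
    (p : Fin 5) (ρ : Fin r) (t : ℕ × ℕ × Bool) : Prop :=
  t = (S p, R ρ, false) ∨
      (S p < t.1 ∧ t.1 ≤ 2 * r + 5 ∧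
        (t.2.2 = true → ∀ p' ρ', vis V p ρ p' ρ') ∧
        (t.2.2 = false →
          InvMany r (Function.update R ρ t.2.1)
            (Function.update S p t.1) (vis V p ρ)))

theorem stepOK_mk {r : ℕ} {R : Fin r → ℕ} {S : Fin 5 → ℕ} {V : Fin 5 → Fin r → Prop}
    {p : Fin 5} {ρ : Fin r} {k w : ℕ} (h1 : S p < k) (h2 : k ≤ 2 * r + 5)
    (hI : InvMany r (Function.update R ρ w) (Function.update S p k) (vis V p ρ)) :
    StepOK r R S V p ρ (k, w, false) :=
  Or.inr ⟨h1, h2, fun h => absurd h (by simp), fun _ => hI⟩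

section steps
variable {r : ℕ} {R : Fin r → ℕ} {S : Fin 5 → ℕ} {V : Fin 5 → Fin r → Prop}

theorem stepA (hr : 4 ≤ r) (I : InvMany r R S V) (ρ : Fin r) :
    StepOK r R S V 0 ρ (actA r (S 0) (R ρ)) := by
  have hi := (I.ar 3 4 pr34).info hr
  have hi' := fun X Y h => (I.ar X Y h).info hr
  unfold actA
  split_ifs with h1 h2
  · have hc := upd_cnt (w := 1) h1.2 (by decide)
    have h2c := hc.2.2 2 (by decide) (by decide)
    refine stepOK_mk (by omega) (by omega) (buildA I ρ _ _ ?_ ?_ ?_ ?_ ?_)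
    · intro X Y h
      have := hi' X Y h
      exact ⟨by omega, by omega, tA1 hr (I.ar X Y h) h1.1 (by omega)⟩
    · omega
    · omega
    · exact fun _ => (I.v0 (by omega)).step _ _ _ (fun _ => Or.inl rfl)
    · intro h
      have : r + 1 ≤ S 0 + 1 := h
      omega
  · have hc := upd_cnt (w := 2) h2.2 (by decide)
    have h2c := hc.2.2 0 (by decide) (by decide)
    refine stepOK_mk (by omega) (by omega) (buildA I ρ _ _ ?_ ?_ ?_ ?_ ?_)
    · intro X Y h
      have := hi' X Y h
      exact ⟨by omega, by omega, tA2 hr (I.ar X Y h) h2.1 (by omega)⟩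
    · omega
    · omega
    · intro h
      have : r + 1 ≤ r := h
      omega
    · exact fun _ => (I.v0 (by omega)).full ρ (Or.inl (by omega))
  · exact Or.inl rfl

theorem stepB (hr : 4 ≤ r) (I : InvMany r R S V) (ρ : Fin r) :
    StepOK r R S V 1 ρ (actB r (S 1) (R ρ)) := by
  have hi := (I.ar 3 4 pr34).info hr
  have hsum := (I.ar 3 4 pr34).sum
  have hi' := fun X Y h => (I.ar X Y h).info hr
  unfold actB
  split_ifs with h1 h2 h3
  · have hp := cnt_pos R ρ h1.2
    refine stepOK_mk (by omega) (by omega) (buildB I ρ _ _ ?_ ?_ ?_ hr ?_ ?_)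
    · intro X Y h
      have := hi' X Y h
      simp only [upd_same h1.2]
      exact ⟨by omega, by omega, tB0 hr (I.ar X Y h) h1.1 hp⟩
    · omega
    · omega
    · exact fun _ _ => Sb.new _ _ _ (by omega) h1.2
    · intro h
      have : r + 1 ≤ 1 := h
      omega
  · have hp := cnt_pos R ρ h2.2.2
    have hc := upd_cnt (w := 2) h2.2.2 (by decide)
    have h2c := hc.2.2 0 (by decide) (by decide)
    refine stepOK_mk (by omega) (by omega) (buildB I ρ _ _ ?_ ?_ ?_ hr ?_ ?_)
    · intro X Y h
      have := hi' X Y h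
      exact ⟨by omega, by omega, tB1 hr (I.ar X Y h) ⟨h2.1, h2.2.1⟩ (by omega)⟩
    · omega
    · omega
    · exact fun _ _ => (I.v1 (by omega) (by omega)).step _ _ _ (fun _ => Or.inl rfl)
    · intro h
      have : r + 1 ≤ S 1 + 1 := h
      omega
  · have hp := cnt_pos R ρ h3.2
    have hc := upd_cnt (w := 0) h3.2 (by decide)
    have h2c := hc.2.2 1 (by decide) (by decide)
    refine stepOK_mk (by omega) (by omega) (buildB I ρ _ _ ?_ ?_ ?_ hr ?_ ?_)
    · intro X Y h
      have := hi' X Y h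
      exact ⟨by omega, by omega, tB2 hr (I.ar X Y h) h3.1 (by omega)⟩
    · omega
    · omega
    · intro _ h
      have : r + 1 ≤ r := h
      omega
    · exact fun _ => (I.v1 (by omega) (by omega)).full ρ (Or.inl (by omega))
  · exact Or.inl rfl

theorem stepC (hr : 4 ≤ r) (I : InvMany r R S V) (ρ : Fin r) :
    StepOK r R S V 2 ρ (actC r (S 2) (R ρ)) := by
  have hi := (I.ar 3 4 pr34).info hr
  have hsum := (I.ar 3 4 pr34).sum
  have hi' := fun X Y h => (I.ar X Y h).info hr
  unfold actC
  split_ifs with h1 h2 h3 h4 h5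
  · have hp := cnt_pos R ρ h1.2
    refine stepOK_mk (by omega) (by omega) (buildC I ρ _ _ ?_ ?_ ?_ hr ?_ ?_)
    · intro X Y h
      have := hi' X Y h
      simp only [upd_same h1.2]
      exact ⟨by omega, by omega, tC0 hr (I.ar X Y h) h1.1 hp⟩
    · omega
    · exact Or.inl h1.2.symm
    · intro h
      have : 2 ≤ 1 := h
      omega
    · intro h
      have : r + 1 ≤ 1 := h
      omega
  · have hp := cnt_pos R ρ h2.2
    refine stepOK_mk (by omega) (by omega) (buildC I ρ _ _ ?_ ?_ ?_ hr ?_ ?_)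
    · intro X Y h
      have := hi' X Y h
      simp only [upd_same h2.2]
      exact ⟨by omega, by omega, tC1 hr (I.ar X Y h) h2.1 hp⟩
    · omega
    · exact Or.inl h2.2.symm
    · exact fun _ _ => Sb.new _ _ _ (by omega) h2.2
    · intro h
      have : r + 1 ≤ 2 := h
      omega
  · have hp := cnt_pos R ρ h3.2.2
    have hc := upd_cnt (w := 0) h3.2.2 (by decide)
    have h2c := hc.2.2 1 (by decide) (by decide)
    refine stepOK_mk (by omega) (by omega) (buildC I ρ _ _ ?_ ?_ ?_ hr ?_ ?_)
    · intro X Y h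
      have := hi' X Y h
      exact ⟨by omega, by omega, tC2 hr (I.ar X Y h) ⟨h3.1, h3.2.1⟩ (by omega)⟩
    · omega
    · right; omega
    · exact fun _ _ => (I.v2 (by omega) (by omega)).step _ _ _ (fun _ => Or.inl rfl)
    · intro h
      have : r + 1 ≤ S 2 + 1 := h
      omega
  · have hp := cnt_pos R ρ h4.2
    refine stepOK_mk (by omega) (by omega) (buildC I ρ _ _ ?_ ?_ ?_ hr ?_ ?_)
    · intro X Y h
      have := hi' X Y h
      simp only [upd_same h4.2]
      exact ⟨by omega, by omega, tC3 hr (I.ar X Y h) h4.1 hp⟩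
    · omega
    · exact Or.inl h4.2.symm
    · intro _ h
      have : r + 1 ≤ r := h
      omega
    · exact fun _ => (I.v2 (by omega) (by omega)).full ρ (Or.inr ⟨by omega, by omega⟩)
  · have hp := cnt_pos R ρ h5.2
    have hc := upd_cnt (w := 1) h5.2 (by decide)
    have h2c := hc.2.2 2 (by decide) (by decide)
    refine stepOK_mk (by omega) (by omega) (buildC I ρ _ _ ?_ ?_ ?_ hr ?_ ?_)
    · intro X Y h
      have := hi' X Y h
      exact ⟨by omega, by omega, tC4 hr (I.ar X Y h) h5.1 (by omega)⟩
    · omega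
    · right; omega
    · intro _ h
      have : r + 2 ≤ r := h
      omega
    · exact fun _ ρ' => Or.inl (I.w2 (by omega) ρ')
  · exact Or.inl rfl

end steps

end PrisonersGame

namespace PrisonersGame

section steps
variable {r : ℕ} {R : Fin r → ℕ} {S : Fin 5 → ℕ} {V : Fin 5 → Fin r → Prop}

set_option maxHeartbeats 2000000 in
theorem stepZ (hr : 4 ≤ r) (I : InvMany r R S V) (X Y : Fin 5) (hXY : Pr X Y) (ρ : Fin r) :
    StepOK r R S V X ρ (actZ r (S X) (R ρ)) := by
  have har := I.ar X Y hXY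
  have hsum := har.sum
  have hz := har.infoZ hr
  have hzY := har.symm.infoZ hr
  have hYs : S X ≠ r + 5 → ¬ (r + 6 ≤ S Y) := by
    intro h h'
    have := hzY (by omega)
    omega
  clear hzY
  unfold actZ
  split_ifs with h1 h2 h3 h4 h5 h6 h7 h8 h9
  · clear hz
    have hp := cnt_pos R ρ h1.2
    refine stepOK_mk (by omega) (by omega)
      (buildZ I X Y hXY ρ _ _ ?_ (Or.inl h1.2.symm) hr (by omega) (fun _ => h1.2.symm) ?_ ?_ ?_ ?_)
    · rw [upd_same h1.2]
      exact tZ0 hr har h1.1 hp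
    all_goals omega
  · clear h1
    clear hz
    have hp := cnt_pos R ρ h2.2
    refine stepOK_mk (by omega) (by omega)
      (buildZ I X Y hXY ρ _ _ ?_ (Or.inl h2.2.symm) hr (by omega) (fun _ => h2.2.symm) ?_ ?_ ?_ ?_)
    · rw [upd_same h2.2]
      exact tZ1 hr har h2.1 hp
    all_goals omega
  · clear h1 h2
    clear hz
    have hp := cnt_pos R ρ h3.2
    have hc := upd_cnt (w := 0) h3.2 (by decide)
    have h2c := hc.2.2 2 (by decide) (by decide)
    have har' : Ar r (S 0) (S 1) (S 2) 3 (S Y) (cnt (Function.update R ρ 0) 0)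
      (cnt (Function.update R ρ 0) 1) (cnt (Function.update R ρ 0) 2) :=
      tZ2 hr har h3.1 (by omega)
    have hz' := har'.infoZ hr (by omega)
    refine stepOK_mk (by omega) (by omega)
      (buildZ I X Y hXY ρ _ _ har' (Or.inr (by omega)) hr (by omega) (by omega) ?_ ?_ ?_ ?_)
    all_goals omega
  · clear h1 h2 h3
    have hp := cnt_pos R ρ h4.2
    replace hz := hz (by omega)
    refine stepOK_mk (by omega) (by omega)
      (buildZ I X Y hXY ρ _ _ ?_ (Or.inl h4.2.symm) hr (by omega) (fun _ => h4.2.symm) ?_ ?_ ?_ ?_)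
    · rw [upd_same h4.2]
      exact tZ3 hr har h4.1 hp
    · omega
    · exact fun _ _ h => Sb.new _ _ _ (by omega) h4.2
    all_goals omega
  · clear h1 h2 h3 h4
    have hp := cnt_pos R ρ h5.2.2
    replace hz := hz (by omega)
    refine stepOK_mk (by omega) (by omega)
      (buildZ I X Y hXY ρ _ _ ?_ (Or.inl h5.2.2.symm) hr (by omega) (fun _ => h5.2.2.symm)
        ?_ ?_ ?_ ?_)
    · rw [upd_same h5.2.2]
      exact tZ4 hr har ⟨h5.1, h5.2.1⟩ hp
    · omega
    · omega
    · omega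
    · exact fun _ => Sb.new _ _ _ (by omega) h5.2.2
  · clear h1 h2 h3 h4 h5
    have hp := cnt_pos R ρ h6.2.2
    have hc := upd_cnt (w := 2) h6.2.2 (by decide)
    have h2c := hc.2.2 1 (by decide) (by decide)
    replace hz := hz (by omega)
    refine stepOK_mk (by omega) (by omega)
      (buildZ I X Y hXY ρ _ _ ?_ (Or.inr (by omega)) hr (by omega) (by omega) ?_ ?_ ?_ ?_)
    · exact tZ5 hr har ⟨h6.1, h6.2.1⟩ (by omega)
    · omega
    · exact fun _ _ h => (I.vz X Y hXY h6.1 (by omega) h).step _ _ _ (fun _ => Or.inl rfl)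
    · omega
    · omega
  · clear h1 h2 h3 h4 h5 h6
    have hp := cnt_pos R ρ h7.2
    replace hz := hz (by omega)
    refine stepOK_mk (by omega) (by omega)
      (buildZ I X Y hXY ρ _ _ ?_ (Or.inl h7.2.symm) hr (by omega) (fun _ => h7.2.symm) ?_ ?_ ?_ ?_)
    · rw [upd_same h7.2]
      exact tZ6 hr har h7.1 hp
    · omega
    · omega
    · exact fun _ _ => (I.vz X Y hXY (by omega) (by omega) (by omega)).full ρ
        (Or.inr ⟨by omega, by omega⟩)
    · omega
  · clear h1 h2 h3 h4 h5 h6 h7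
    have hp := cnt_pos R ρ h8.2.2
    have hc := upd_cnt (w := 1) h8.2.2 (by decide)
    have h2c := hc.2.2 0 (by decide) (by decide)
    replace hz := hz (by omega)
    refine stepOK_mk (by omega) (by omega)
      (buildZ I X Y hXY ρ _ _ ?_ (Or.inr (by omega)) hr (by omega) (by omega) ?_ ?_ ?_ ?_)
    · exact tZ7 hr har ⟨h8.1, h8.2.1⟩ (by omega)
    · omega
    · omega
    · exact fun _ _ ρ' => Or.inl (I.wz X Y hXY (by omega) (by omega) ρ')
    · omega
  · clear h1 h2 h3 h4 h5 h6 h7 h8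
    replace hz := hz (by omega)
    have hu := I.uz X Y hXY h9.1
    by_cases hlast : S X = 2 * r + 4
    · refine Or.inr ⟨by simp, by simp; omega, fun _ => ?_, ?_⟩
      · intro p' ρ'
        by_cases hp0 : p' = 0
        · subst hp0; exact Or.inl (I.w0 (by omega) ρ')
        by_cases hp1 : p' = 1
        · subst hp1; exact Or.inl (I.w1 (by omega) ρ')
        by_cases hp2 : p' = 2
        · subst hp2; exact Or.inl (I.w2 (by omega) ρ')
        by_cases hpX : p' = X
        · subst hpX
          exact hu.full ρ (Or.inr ⟨by omega, h9.2.2⟩) ρ'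
        · have hpY : p' = Y := by
            unfold Pr at hXY
            omega
          subst hpY
          exact Or.inl (I.wz _ _ hXY.ne.2.2.2.2.2.2.2 (by omega) (by omega) ρ')
      · simp [hlast]
    · rw [decide_eq_false hlast]
      have c0 := cnt_update R ρ 1 0
      have c1 := cnt_update R ρ 1 1
      have c2 := cnt_update R ρ 1 2
      have hcol := cnt_le2 hsum ρ
      refine stepOK_mk (by omega) (by omega)
        (buildZ I X Y hXY ρ _ _ ?_ (Or.inr (by omega)) hr (by omega) (by omega) ?_ ?_ ?_ ?_)
      · refine tZ8 hr har ⟨h9.1, by omega⟩ ?_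
        rcases hcol with h | h | h
        · simp [h] at c0 c1 c2; omega
        · exact absurd h h9.2.2
        · simp [h] at c0 c1 c2; omega
      · omega
      · omega
      · omega
      · exact fun _ => hu.step _ _ _ (fun _ => Or.inl rfl)
  · exact Or.inl rfl

set_option maxHeartbeats 2000000 in
/-- Progress of a sleeping prisoner. -/
theorem progZ (hr : 4 ≤ r) (I : InvMany r R S V) (X Y : Fin 5) (hXY : Pr X Y)
    (hz : Zr r (S X) (S Y) (cnt R 0) (cnt R 1) (cnt R 2)) :
    ∃ p ρ, actMany r p (S p) (R ρ) ≠ (S p, R ρ, false) := by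
  have aX : ∀ k s, actMany r X k s = actZ r k s := by
    intro k s
    simp [actMany, hXY.ne]
  have aY : ∀ k s, actMany r Y k s = actZ r k s := by
    intro k s
    simp [actMany, hXY.ne]
  have go : ∀ k s, (k = 0 ∧ s = 2) ∨ (k = 1 ∧ s = 0) ∨ (k = 2 ∧ s = 1) ∨ (k = 3 ∧ s = 2) ∨
      (3 ≤ k ∧ k ≤ r + 2 ∧ s = 1) ∨ (4 ≤ k ∧ k < r + 2 ∧ s = 0) ∨ (k = r + 2 ∧ s = 0) ∨
      (r + 3 ≤ k ∧ k ≤ r + 4 ∧ s = 2) ∨ (r + 6 ≤ k ∧ k < 2 * r + 5 ∧ s ≠ 1) →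
      actZ r k s ≠ (k, s, false) := by
    intro k s h heq
    have h' := congrArg Prod.fst heq
    unfold actZ at h'
    split_ifs at h' with g1 g2 g3 g4 g5 g6 g7 g8 g9
    · clear h heq; dsimp only at h'; omega
    · clear h heq g1; dsimp only at h'; omega
    · clear h heq g1 g2; dsimp only at h'; omega
    · clear h heq g1 g2 g3; dsimp only at h'; omega
    · clear h heq g1 g2 g3 g4; dsimp only at h'; omega
    · clear h heq g1 g2 g3 g4 g5; dsimp only at h'; omega
    · clear h heq g1 g2 g3 g4 g5 g6; dsimp only at h'; omega
    · clear h heq g1 g2 g3 g4 g5 g6 g7; dsimp only at h'; omega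
    · clear h heq g1 g2 g3 g4 g5 g6 g7 g8; dsimp only at h'; omega
    · rcases h with h | h | h | h | h | h | h | h | h
      · exact g1 h
      · exact g2 h
      · exact g3 h
      · exact g4 h
      · exact g5 h
      · exact g6 h
      · exact g7 h
      · exact g8 h
      · exact g9 h
  have goX : ∀ s, 1 ≤ cnt R s → actZ r (S X) s ≠ (S X, s, false) →
      ∃ p ρ, actMany r p (S p) (R ρ) ≠ (S p, R ρ, false) := by
    intro s hs h
    obtain ⟨ρ, rfl⟩ := exists_of_cnt hs
    exact ⟨X, ρ, by rw [aX]; exact h⟩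
  have goY : ∀ s, 1 ≤ cnt R s → actZ r (S Y) s ≠ (S Y, s, false) →
      ∃ p ρ, actMany r p (S p) (R ρ) ≠ (S p, R ρ, false) := by
    intro s hs h
    obtain ⟨ρ, rfl⟩ := exists_of_cnt hs
    exact ⟨Y, ρ, by rw [aY]; exact h⟩
  rcases hz with h | h | h | h | h | h | h
  · have : S X = 0 ∨ S X = 1 ∨ S X = 2 := by omega
    rcases this with h' | h' | h'
    · exact goX 2 (by omega) (go _ _ (by clear go goX goY; omega))
    · exact goX 0 (by omega) (go _ _ (by clear go goX goY; omega))
    · exact goX 1 (by omega) (go _ _ (by clear go goX goY; omega))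
  · exact goX 2 (by omega) (go _ _ (by clear go goX goY; omega))
  · exact goX 0 (by omega) (go _ _ (by clear go goX goY; omega))
  · by_cases hx : S X = r + 5
    · have : S Y = 0 ∨ S Y = 1 ∨ S Y = 2 := by omega
      rcases this with h' | h' | h'
      · exact goY 2 (by omega) (go _ _ (by clear go goX goY; omega))
      · exact goY 0 (by omega) (go _ _ (by clear go goX goY; omega))
      · exact goY 1 (by omega) (go _ _ (by clear go goX goY; omega))
    · exact goX 2 (by omega) (go _ _ (by clear go goX goY; omega))
  · by_cases hx : S X = r + 5
    · exact goY 1 (by omega) (go _ _ (by clear go goX goY; omega))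
    · exact goX 2 (by omega) (go _ _ (by clear go goX goY; omega))
  · by_cases hx : S X = r + 5
    · exact goY 1 (by omega) (go _ _ (by clear go goX goY; omega))
    · exact goX 2 (by omega) (go _ _ (by clear go goX goY; omega))
  · by_cases h0 : 1 ≤ cnt R 0
    · exact goY 0 (by omega) (go _ _ (by clear go goX goY; omega))
    · exact goY 2 (by omega) (go _ _ (by clear go goX goY; omega))

theorem progMany (hr : 4 ≤ r) (I : InvMany r R S V) :
    ∃ p ρ, actMany r p (S p) (R ρ) ≠ (S p, R ρ, false) := by
  have go : ∀ (p : Fin 5) (s : ℕ), 1 ≤ cnt R s → (actMany r p (S p) s).1 ≠ S p →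
      ∃ p ρ, actMany r p (S p) (R ρ) ≠ (S p, R ρ, false) := by
    intro p s hs h
    obtain ⟨ρ, rfl⟩ := exists_of_cnt hs
    exact ⟨p, ρ, fun h' => h (by rw [h'])⟩
  have har := I.ar 3 4 pr34
  rcases har with h | h | h | h | h | h | ⟨h, hz⟩ | ⟨h, hz⟩
  · by_cases ha : S 0 = r
    · refine go 0 1 (by omega) ?_
      simp [actMany, actA, ha]
    · have ha' : S 0 < r := by omega
      refine go 0 0 (by omega) ?_
      simp [actMany, actA, ha']
  · refine go 1 2 (by omega) ?_
    simp [actMany, actB, h.2.1]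
  · by_cases hb : S 1 = r
    · have h0 : r ≠ 0 := by omega
      refine go 1 2 (by omega) ?_
      simp [actMany, actB, hb, h0]
    · have hb' : S 1 < r := by omega
      refine go 1 1 (by omega) ?_
      simp [actMany, actB, h.2.1, hb']
  · have : S 2 = 0 ∨ S 2 = 1 := by omega
    rcases this with h' | h'
    · refine go 2 2 (by omega) ?_
      simp [actMany, actC, h']
    · refine go 2 0 (by omega) ?_
      simp [actMany, actC, h']
  · refine go 2 2 (by omega) ?_
    have h0 : S 2 ≠ 0 := by omega
    by_cases hb : S 2 = r
    · have h0 : r ≠ 0 := by omega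
      simp [actMany, actC, hb, h0]
    · have hb' : S 2 < r := by omega
      simp [actMany, actC, h.2.2.1, hb', h0]
  · refine go 2 0 (by omega) ?_
    have h0 : r ≠ 0 := by omega
    simp [actMany, actC, h.2.2.1, h0]
  · exact progZ hr I 3 4 pr34 hz
  · exact progZ hr I 4 3 (Or.inr ⟨rfl, rfl⟩) hz

end steps

theorem winning_many (r : ℕ) (hr : 4 ≤ r) : Winning (n := 5) (r := r) (mkStrat (actMany r)) := by
  apply winning_of_inv (actMany r) (InvMany r) (2 * r + 5)
  · have c0 : cnt (fun _ : Fin r => 0) 0 = r := by simp [cnt]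
    have c1 : cnt (fun _ : Fin r => 0) 1 = 0 := by simp [cnt]
    have c2 : cnt (fun _ : Fin r => 0) 2 = 0 := by simp [cnt]
    constructor
    · intro X Y _
      exact .p1 (by omega)
    · intro _ ρ h
      exact absurd h (by simp)
    all_goals
      intros
      omega
  · intro R S V V' h I
    exact ⟨I.ar, fun a ρ b => h _ _ (I.v0 a ρ b), fun a ρ => h _ _ (I.w0 a ρ),
      fun a a' ρ b => h _ _ (I.v1 a a' ρ b), fun a ρ => h _ _ (I.w1 a ρ),
      fun a a' ρ b => h _ _ (I.v2 a a' ρ b), fun a ρ => h _ _ (I.w2 a ρ),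
      fun X Y p a1 a2 a3 ρ b => h _ _ (I.vz X Y p a1 a2 a3 ρ b),
      fun X Y p a1 a2 ρ => h _ _ (I.wz X Y p a1 a2 ρ),
      fun X Y p a1 ρ b => h _ _ (I.uz X Y p a1 ρ b)⟩
  · intro R S V p ρ I
    change StepOK r R S V p ρ (actMany r p (S p) (R ρ))
    fin_cases p
    · exact stepA hr I ρ
    · exact stepB hr I ρ
    · exact stepC hr I ρ
    · exact stepZ hr I 3 4 (Or.inl ⟨rfl, rfl⟩) ρ
    · exact stepZ hr I 4 3 (Or.inr ⟨rfl, rfl⟩) ρ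
  · intro R S V I
    exact progMany hr I

theorem valid_A (r k s : ℕ) : (actA r k s).2.1 ≤ 2 ∨ (actA r k s).2.1 = s := by
  unfold actA
  split_ifs <;> simp

theorem valid_B (r k s : ℕ) : (actB r k s).2.1 ≤ 2 ∨ (actB r k s).2.1 = s := by
  unfold actB
  split_ifs <;> simp

theorem valid_C (r k s : ℕ) : (actC r k s).2.1 ≤ 2 ∨ (actC r k s).2.1 = s := by
  unfold actC
  split_ifs <;> simp

theorem valid_Z (r k s : ℕ) : (actZ r k s).2.1 ≤ 2 ∨ (actZ r k s).2.1 = s := by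
  unfold actZ
  split_ifs <;> simp

theorem valid_many (r : ℕ) (p : Fin 5) (k s : ℕ) :
    (actMany r p k s).2.1 ≤ 2 ∨ (actMany r p k s).2.1 = s := by
  unfold actMany
  split_ifs
  · exact valid_A r k s
  · exact valid_B r k s
  · exact valid_C r k s
  · exact valid_Z r k s

theorem valid_one (p : Fin 5) (k s : ℕ) :
    (actOne p k s).2.1 ≤ 2 ∨ (actOne p k s).2.1 = s := by
  unfold actOne
  split_ifs <;> simp

theorem valid_two (p : Fin 5) (k s : ℕ) :
    (actTwo p k s).2.1 ≤ 2 ∨ (actTwo p k s).2.1 = s := by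
  unfold actTwo
  split_ifs <;> simp

end PrisonersGame

open PrisonersGame in
/-- Five prisoners have a winning strategy for any number of states `q ≥ 3`
and any number of rooms `r ≥ 1` with `r ≠ 3`. -/
theorem winning_strategy_five (r q : ℕ) (hr : 1 ≤ r) (hr3 : r ≠ 3)
    (hq : 3 ≤ q) : HasWinningStrategy 5 r q := by
  by_cases h1 : r = 1
  · subst h1
    exact ⟨mkStrat actOne, valid_of_act actOne q hq valid_one, winning_one⟩
  by_cases h2 : r = 2
  · subst h2
    exact ⟨mkStrat actTwo, valid_of_act actTwo q hq valid_two, winning_two⟩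
  exact ⟨mkStrat (actMany r), valid_of_act (actMany r) q hq (valid_many r),
    winning_many r (by omega)⟩
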